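/- Let 0 < ε_1 < … < ε_m be tolerances, let c be the cost values of the dynamic program, and let S_m, …, S_1 be an algorithm output. Then for every 1 ≤ k ≤ m and every edge (i,j) of S_k, the cost value c(k,(i,j)) equals the sum over ℓ = 1, …, k of the number of edges (x,y) of S_ℓ satisfying i ≤ x < y ≤ j. -/

import Mathlib

open Metric

noncomputable section

/-- The Euclidean plane. -/
abbrev Pt : Type := EuclideanSpace ℝ (Fin 2)

/-- The subcurve `⟨p i, …, p j⟩`: the union of the segments between consecutive vertices. -/
def subcurve {n : ℕ} (p : Fin n → Pt) (i j : Fin n) : Set Pt :=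
  ⋃ (t : Fin n) (_ : i ≤ t ∧ t < j) (h : (t : ℕ) + 1 < n),
    segment ℝ (p t) (p ⟨(t : ℕ) + 1, h⟩)

/-- The (Hausdorff-distance) error of the shortcut `(i, j)`. -/
def err {n : ℕ} (p : Fin n → Pt) (i j : Fin n) : ℝ :=
  Metric.hausdorffDist (segment ℝ (p i) (p j)) (subcurve p i j)

/-- The edges (consecutive pairs) of a path given as a list of vertices. -/
def edges {n : ℕ} (l : List (Fin n)) : List (Fin n × Fin n) := l.zip l.tail

/-- `l` is a path from `i` to `j` at tolerance `ε`: a strictly increasing sequence of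
indices starting at `i`, ending at `j`, all of whose edges are valid shortcuts for `ε`. -/
def IsPath {n : ℕ} (p : Fin n → Pt) (ε : ℝ) (i j : Fin n) (l : List (Fin n)) : Prop :=
  l.Chain' (· < ·) ∧ l.head? = some i ∧ l.getLast? = some j ∧
    ∀ e ∈ edges l, err p e.1 e.2 ≤ ε

/-- The cost of a path: the sum of the costs of its edges. -/
def pathCost {n : ℕ} {α : Type*} [AddCommMonoid α] (c : Fin n → Fin n → α)
    (l : List (Fin n)) : α :=
  ((edges l).map (fun e => c e.1 e.2)).sum

/-- Minimum cost (natural-valued) of a path from `i` to `j` at tolerance `ε`. -/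
def minCost {n : ℕ} (p : Fin n → Pt) (ε : ℝ) (c : Fin n → Fin n → ℕ) (i j : Fin n) : ℕ :=
  sInf {s : ℕ | ∃ l, IsPath p ε i j l ∧ pathCost c l = s}

/-- Minimum cost (real-valued) of a path from `i` to `j` at tolerance `ε`. -/
def minCostR {n : ℕ} (p : Fin n → Pt) (ε : ℝ) (c : Fin n → Fin n → ℝ) (i j : Fin n) : ℝ :=
  sInf {s : ℝ | ∃ l, IsPath p ε i j l ∧ pathCost c l = s}

/-- `l` is a minimum-cost path from `i` to `j` at tolerance `ε` w.r.t. cost `c`. -/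
def IsMinPath {n : ℕ} (p : Fin n → Pt) (ε : ℝ) (c : Fin n → Fin n → ℕ) (i j : Fin n)
    (l : List (Fin n)) : Prop :=
  IsPath p ε i j l ∧ ∀ l', IsPath p ε i j l' → pathCost c l ≤ pathCost c l'

/-- `L'` is obtained from `L` by replacing each edge `(i, j)` of `L` by a minimum-cost
path from `i` to `j` at tolerance `ε`, and concatenating. -/
def Refines {n : ℕ} (p : Fin n → Pt) (ε : ℝ) (c : Fin n → Fin n → ℕ)
    (L L' : List (Fin n)) : Prop :=
  ∃ f : Fin n × Fin n → List (Fin n),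
    (∀ e ∈ edges L, IsMinPath p ε c e.1 e.2 (f e)) ∧
    L' = L.take 1 ++ ((edges L).map (fun e => (f e).tail)).flatten

/-- `S 1, …, S m` is a progressive simplification for the tolerances `ε 1 < … < ε m`:
each `S k` is an `ε k`-simplification (a path from `v0` to `v1`), and every vertex of
`S (k+1)` is a vertex of `S k`. -/
def ProgSimp {n : ℕ} (p : Fin n → Pt) (m : ℕ) (ε : ℕ → ℝ) (v0 v1 : Fin n)
    (S : ℕ → List (Fin n)) : Prop :=
  (∀ k, 1 ≤ k → k ≤ m → IsPath p (ε k) v0 v1 (S k)) ∧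
  (∀ k, 1 ≤ k → k < m → ∀ v ∈ S (k + 1), v ∈ S k)

section EdgeLists

variable {n : ℕ}

@[simp] theorem edges_nil : edges ([] : List (Fin n)) = [] := rfl

@[simp] theorem edges_singleton (a : Fin n) : edges [a] = [] := rfl

@[simp] theorem edges_cons_cons (a b : Fin n) (l : List (Fin n)) :
    edges (a :: b :: l) = (a, b) :: edges (b :: l) := rfl

theorem fst_mem_of_mem_edges {l : List (Fin n)} {e : Fin n × Fin n} (he : e ∈ edges l) :
    e.1 ∈ l :=
  (List.of_mem_zip (a := e.1) (b := e.2) he).1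

theorem snd_mem_of_mem_edges {l : List (Fin n)} {e : Fin n × Fin n} (he : e ∈ edges l) :
    e.2 ∈ l :=
  List.mem_of_mem_tail (List.of_mem_zip (a := e.1) (b := e.2) he).2

theorem isChain_iff_edges {l : List (Fin n)} :
    l.IsChain (· < ·) ↔ ∀ e ∈ edges l, e.1 < e.2 := by
  induction l with
  | nil => simp
  | cons a t ih =>
    cases t with
    | nil => simp
    | cons b t => simp only [List.isChain_cons_cons, ih, edges_cons_cons, List.forall_mem_cons]

theorem edges_append_cons (u w : List (Fin n)) (b : Fin n) :
    edges (u ++ b :: w) = edges (u ++ [b]) ++ edges (b :: w) := by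
  induction u with
  | nil => simp
  | cons a t ih =>
    cases t with
    | nil => simp
    | cons c t => simpa using ih

/-- In a strictly increasing list no vertex lies strictly inside an edge. -/
theorem le_or_le_of_mem_edges {l : List (Fin n)} (hl : l.IsChain (· < ·)) {e : Fin n × Fin n}
    (he : e ∈ edges l) {b : Fin n} (hb : b ∈ l) : e.2 ≤ b ∨ b ≤ e.1 := by
  induction l with
  | nil => simp at hb
  | cons a t ih =>
    cases t with
    | nil => simp at he
    | cons c t =>
      have hp := List.isChain_iff_pairwise.mp hl
      rw [List.pairwise_cons] at hp
      obtain ⟨hac, htail⟩ := hp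
      rw [edges_cons_cons, List.mem_cons] at he
      rcases List.mem_cons.mp hb with rfl | hb
      · rcases he with rfl | he
        · exact Or.inr le_rfl
        · exact Or.inr (hac _ (fst_mem_of_mem_edges he)).le
      · rcases he with rfl | he
        · rcases List.mem_cons.mp hb with rfl | hb
          · exact Or.inl le_rfl
          · exact Or.inl ((List.pairwise_cons.mp htail).1 _ hb).le
        · exact ih (List.isChain_iff_pairwise.mpr htail) he hb

theorem nodup_edges {l : List (Fin n)} (hl : l.Nodup) : (edges l).Nodup := by
  induction l with
  | nil => simp
  | cons a t ih =>
    cases t with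
    | nil => simp
    | cons b t =>
      rw [List.nodup_cons] at hl
      rw [edges_cons_cons, List.nodup_cons]
      exact ⟨fun h => hl.1 (fst_mem_of_mem_edges h), ih hl.2⟩

/-- The number of edges of `l` contained in the index interval from `a` to `b`. -/
def edgesWithin (l : List (Fin n)) (a b : Fin n) : ℕ :=
  (edges l).countP (fun e => decide (a ≤ e.1 ∧ e.1 < e.2 ∧ e.2 ≤ b))

theorem edgesWithin_self (l : List (Fin n)) (a : Fin n) : edgesWithin l a a = 0 := by
  rw [edgesWithin, List.countP_eq_zero]
  rintro e -
  simp only [decide_eq_true_eq]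
  rintro ⟨h₁, h₂, h₃⟩
  exact absurd (h₁.trans_lt h₂) h₃.not_gt

theorem edgesWithin_add {l : List (Fin n)} (hl : l.IsChain (· < ·)) {a b d : Fin n}
    (hab : a ≤ b) (hbd : b ≤ d) (hb : b ∈ l) :
    edgesWithin l a b + edgesWithin l b d = edgesWithin l a d := by
  have key : ∀ e ∈ edges l, e.2 ≤ b ∨ b ≤ e.1 := fun e he => le_or_le_of_mem_edges hl he hb
  simp only [edgesWithin]
  generalize edges l = es at key
  induction es with
  | nil => simp
  | cons e es ih =>
    rw [List.forall_mem_cons] at key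
    have := ih key.2
    have he := key.1
    simp only [List.countP_cons, decide_eq_true_eq]
    split_ifs <;> grind

theorem edgesWithin_of_mem_edges {l : List (Fin n)} (hl : l.IsChain (· < ·))
    {e : Fin n × Fin n} (he : e ∈ edges l) : edgesWithin l e.1 e.2 = 1 := by
  have hnodup : l.Nodup := (List.isChain_iff_pairwise.mp hl).imp fun h => h.ne
  rw [← List.count_eq_one_of_mem (nodup_edges hnodup) he, edgesWithin, List.count]
  refine List.countP_congr fun e' he' => ?_
  simp only [decide_eq_true_eq, beq_iff_eq]
  constructor
  · rintro ⟨h₁, h₂, h₃⟩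
    have hx := le_or_le_of_mem_edges hl he (fst_mem_of_mem_edges he')
    have hy := le_or_le_of_mem_edges hl he (snd_mem_of_mem_edges he')
    exact Prod.ext (by grind) (by grind)
  · rintro rfl
    exact ⟨le_rfl, isChain_iff_edges.mp hl _ he, le_rfl⟩

theorem pathCost_edgesWithin {M : List (Fin n)} (hM : M.IsChain (· < ·)) {l : List (Fin n)}
    (hl : l.IsChain (· < ·)) (hsub : l ⊆ M) {i j : Fin n} (hi : l.head? = some i)
    (hj : l.getLast? = some j) : pathCost (edgesWithin M) l = edgesWithin M i j := by
  induction l generalizing i with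
  | nil => simp at hi
  | cons a t ih =>
    obtain rfl : a = i := by simpa using hi
    cases t with
    | nil =>
      obtain rfl : a = j := by simpa using hj
      simp [pathCost, edgesWithin_self]
    | cons b t =>
      have hj' : (b :: t).getLast? = some j := by simpa using hj
      rw [List.isChain_cons_cons] at hl
      have hbj : b ≤ j := by
        rcases List.mem_cons.mp (List.mem_of_getLast? hj') with h | h
        · exact h.ge
        · exact ((List.pairwise_cons.mp (List.isChain_iff_pairwise.mp hl.2)).1 _ h).le
      have := ih hl.2 (fun x hx => hsub (List.mem_cons_of_mem _ hx)) rfl hj'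
      rw [← edgesWithin_add hM hl.1.le hbj (hsub (by simp)), ← this]
      simp [pathCost]

/-- The list obtained from `L` by replacing every edge `e` by the list `f e`. -/
def replaceEdges (f : Fin n × Fin n → List (Fin n)) (L : List (Fin n)) : List (Fin n) :=
  L.take 1 ++ ((edges L).map (fun e => (f e).tail)).flatten

theorem replaceEdges_cons_cons {f : Fin n × Fin n → List (Fin n)} {a b : Fin n} (t : List (Fin n))
    (ha : (f (a, b)).head? = some a) (hb : (f (a, b)).getLast? = some b) :
    replaceEdges f (a :: b :: t) = (f (a, b)).dropLast ++ replaceEdges f (b :: t) := by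
  obtain ⟨u, hu⟩ := List.head?_eq_some_iff.mp ha
  obtain ⟨w, hw⟩ := List.getLast?_eq_some_iff.mp hb
  have h : a :: (f (a, b)).tail = (f (a, b)).dropLast ++ [b] := by
    have hd : (f (a, b)).dropLast = w := by rw [hw, List.dropLast_concat]
    rw [hd, ← hw, hu, List.tail_cons]
  simp only [replaceEdges, edges_cons_cons, List.map_cons, List.flatten_cons, List.take_succ_cons,
    List.take_zero, List.cons_append, List.nil_append]
  rw [← List.cons_append, h]
  simp

theorem edges_replaceEdges {f : Fin n × Fin n → List (Fin n)} {L : List (Fin n)}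
    (hf : ∀ e ∈ edges L, (f e).head? = some e.1 ∧ (f e).getLast? = some e.2) :
    edges (replaceEdges f L) = (edges L).flatMap (fun e => edges (f e)) := by
  induction L with
  | nil => simp [replaceEdges]
  | cons a t ih =>
    cases t with
    | nil => simp [replaceEdges]
    | cons b t =>
      rw [edges_cons_cons, List.forall_mem_cons] at hf
      obtain ⟨w, hw⟩ := List.getLast?_eq_some_iff.mp hf.1.2
      rw [replaceEdges_cons_cons t hf.1.1 hf.1.2, edges_cons_cons, List.flatMap_cons, ← ih hf.2, hw,
        List.dropLast_concat]
      exact edges_append_cons _ _ _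

theorem subset_replaceEdges {f : Fin n × Fin n → List (Fin n)} {L : List (Fin n)}
    (hf : ∀ e ∈ edges L, (f e).head? = some e.1 ∧ (f e).getLast? = some e.2)
    (hL : L.IsChain (· < ·)) : L ⊆ replaceEdges f L := by
  induction L with
  | nil => simp
  | cons a t ih =>
    cases t with
    | nil => simp [replaceEdges]
    | cons b t =>
      rw [List.isChain_cons_cons] at hL
      rw [edges_cons_cons, List.forall_mem_cons] at hf
      refine List.cons_subset.mpr ⟨by simp [replaceEdges], ?_⟩
      rw [replaceEdges_cons_cons t hf.1.1 hf.1.2]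
      exact fun x hx => List.mem_append_right _ (ih hf.2 hL.2 hx)

theorem subset_replaceEdges_of_mem_edges {f : Fin n × Fin n → List (Fin n)} {L : List (Fin n)}
    (hf : ∀ e ∈ edges L, (f e).head? = some e.1 ∧ (f e).getLast? = some e.2)
    (hL : L.IsChain (· < ·)) {e : Fin n × Fin n} (he : e ∈ edges L) : f e ⊆ replaceEdges f L := by
  obtain ⟨u, hu⟩ := List.head?_eq_some_iff.mp (hf e he).1
  rw [hu]
  refine List.cons_subset.mpr ⟨subset_replaceEdges hf hL (fst_mem_of_mem_edges he), fun x hx => ?_⟩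
  refine List.mem_append_right _ (List.mem_flatten.mpr ⟨_, List.mem_map.mpr ⟨e, he, rfl⟩, ?_⟩)
  rwa [hu]

theorem IsMinPath.minCost_eq {p : Fin n → Pt} {ε : ℝ} {c : Fin n → Fin n → ℕ} {i j : Fin n}
    {l : List (Fin n)} (h : IsMinPath p ε c i j l) : minCost p ε c i j = pathCost c l := by
  refine le_antisymm (Nat.sInf_le ⟨l, h.1, rfl⟩) (le_csInf ⟨_, l, h.1, rfl⟩ ?_)
  rintro _ ⟨l', hl', rfl⟩
  exact h.2 l' hl'

theorem pathCost_congr {c c' : Fin n → Fin n → ℕ} {l : List (Fin n)}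
    (h : ∀ e ∈ edges l, c e.1 e.2 = c' e.1 e.2) : pathCost c l = pathCost c' l := by
  rw [pathCost, pathCost, List.map_congr_left h]

theorem pathCost_sum {ι : Type*} (s : Finset ι) (g : ι → Fin n → Fin n → ℕ)
    (l : List (Fin n)) :
    pathCost (fun i j => ∑ ℓ ∈ s, g ℓ i j) l = ∑ ℓ ∈ s, pathCost (g ℓ) l := by
  simp only [pathCost]
  induction edges l with
  | nil => simp
  | cons e es ih => simp [ih, Finset.sum_add_distrib]

end EdgeLists

/-- For an algorithm output `S m, …, S 1`, the cost value of every edge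
`(i, j)` of `S k` equals the total number of edges `(x, y)` with `i ≤ x < y ≤ j`
over the simplifications `S 1, …, S k`. -/
theorem cost_counts_covering_edges {n m : ℕ} (hn : 2 ≤ n) (hm : 1 ≤ m) (p : Fin n → Pt)
    (ε : ℕ → ℝ) (hε1 : 0 < ε 1)
    (hεmono : ∀ k, 1 ≤ k → k < m → ε k < ε (k + 1))
    (c : ℕ → Fin n → Fin n → ℕ)
    (hc1 : ∀ i j : Fin n, i < j → err p i j ≤ ε 1 → c 1 i j = 1)
    (hck : ∀ k, 2 ≤ k → k ≤ m → ∀ i j : Fin n, i < j → err p i j ≤ ε k →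
      c k i j = 1 + minCost p (ε (k - 1)) (c (k - 1)) i j)
    (S : ℕ → List (Fin n))
    (hSm : IsMinPath p (ε m) (c m) (⟨0, by omega⟩ : Fin n) (⟨n - 1, by omega⟩ : Fin n) (S m))
    (hSk : ∀ k, 1 ≤ k → k < m → Refines p (ε k) (c k) (S (k + 1)) (S k)) :
    ∀ k, 1 ≤ k → k ≤ m → ∀ e ∈ edges (S k),
      c k e.1 e.2 = ∑ ℓ ∈ Finset.Icc 1 k,
        (edges (S ℓ)).countP (fun e' => decide (e.1 ≤ e'.1 ∧ e'.1 < e'.2 ∧ e'.2 ≤ e.2)) := by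
  obtain ⟨f, hf⟩ : ∃ f : ℕ → Fin n × Fin n → List (Fin n), ∀ k, 1 ≤ k → k < m →
      (∀ e ∈ edges (S (k + 1)), IsMinPath p (ε k) (c k) e.1 e.2 (f k e)) ∧
        S k = replaceEdges (f k) (S (k + 1)) := by
    choose! f hf using hSk
    exact ⟨f, hf⟩
  have hends : ∀ k, 1 ≤ k → k < m → ∀ e ∈ edges (S (k + 1)),
      (f k e).head? = some e.1 ∧ (f k e).getLast? = some e.2 :=
    fun k h1 hk e he => ⟨((hf k h1 hk).1 e he).1.2.1, ((hf k h1 hk).1 e he).1.2.2.1⟩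
  have hedge : ∀ k, 1 ≤ k → k < m → ∀ e ∈ edges (S k),
      ∃ e₀ ∈ edges (S (k + 1)), e ∈ edges (f k e₀) := by
    intro k h1 hk e he
    rw [(hf k h1 hk).2, edges_replaceEdges (hends k h1 hk)] at he
    exact List.mem_flatMap.mp he
  have hvalid : ∀ k, 1 ≤ k → k ≤ m → ∀ e ∈ edges (S k), e.1 < e.2 ∧ err p e.1 e.2 ≤ ε k := by
    intro k h1 hk e he
    rcases hk.eq_or_lt with rfl | hk
    · exact ⟨isChain_iff_edges.mp hSm.1.1 e he, hSm.1.2.2.2 e he⟩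
    · obtain ⟨e₀, he₀, he⟩ := hedge k h1 hk e he
      have hp := ((hf k h1 hk).1 e₀ he₀).1
      exact ⟨isChain_iff_edges.mp hp.1 e he, hp.2.2.2 e he⟩
  have hchain : ∀ k, 1 ≤ k → k ≤ m → (S k).IsChain (· < ·) := fun k h1 hk =>
    isChain_iff_edges.mpr fun e he => (hvalid k h1 hk e he).1
  have hsub : ∀ ℓ k, 1 ≤ ℓ → ℓ ≤ k → k ≤ m → S k ⊆ S ℓ := by
    intro ℓ k h1 hℓk
    induction k, hℓk using Nat.le_induction with
    | base => exact fun _ => List.Subset.refl _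
    | succ k hℓk ih =>
      intro hk
      refine List.Subset.trans ?_ (ih (by omega))
      rw [(hf k (by omega) hk).2]
      exact subset_replaceEdges (hends k (by omega) hk) (hchain (k + 1) (by omega) hk)
  intro k h1
  change k ≤ m → ∀ e ∈ edges (S k),
    c k e.1 e.2 = ∑ ℓ ∈ Finset.Icc 1 k, edgesWithin (S ℓ) e.1 e.2
  induction k, h1 using Nat.le_induction with
  | base =>
    intro hk e he
    obtain ⟨hlt, herr⟩ := hvalid 1 le_rfl hk e he
    simp [hc1 _ _ hlt herr, edgesWithin_of_mem_edges (hchain 1 le_rfl hk) he]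
  | succ k h1 ih =>
    intro hk e he
    obtain ⟨hlt, herr⟩ := hvalid (k + 1) (by omega) hk e he
    have hmin := (hf k h1 hk).1 e he
    have hfS : f k e ⊆ S k := by
      rw [(hf k h1 hk).2]
      exact subset_replaceEdges_of_mem_edges (hends k h1 hk) (hchain (k + 1) (by omega) hk) he
    have hfedges : edges (f k e) ⊆ edges (S k) := by
      rw [(hf k h1 hk).2, edges_replaceEdges (hends k h1 hk)]
      exact fun e' he' => List.mem_flatMap.mpr ⟨e, he, he'⟩
    rw [hck (k + 1) (by omega) hk _ _ hlt herr, Nat.add_sub_cancel, hmin.minCost_eq,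
      Finset.sum_Icc_succ_top (by omega),
      edgesWithin_of_mem_edges (hchain (k + 1) (by omega) hk) he, add_comm,
      pathCost_congr (c' := fun i j => ∑ ℓ ∈ Finset.Icc 1 k, edgesWithin (S ℓ) i j)
        fun e' he' => ih (by omega) e' (hfedges he'),
      pathCost_sum (Finset.Icc 1 k) (fun ℓ => edgesWithin (S ℓ))]
    congr 1
    refine Finset.sum_congr rfl fun ℓ hℓ => ?_
    rw [Finset.mem_Icc] at hℓ
    exact pathCost_edgesWithin (hchain ℓ hℓ.1 (by omega)) hmin.1.1
      (List.Subset.trans hfS (hsub ℓ k hℓ.1 hℓ.2 (by omega))) hmin.1.2.1 hmin.1.2.2.1
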